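/- Let φ(x,t) = t^p + a(x) t^q with 1 < p < q < ∞, a a nonnegative function in C^{0,α}(ℝⁿ) for some α ∈ (0,1], and assume q/p ≤ 1 + α/n. Let Ω ⊆ ℝⁿ be open and 0 < r_o ≤ 1. Suppose there is c₀ > 0 such that for every z ∈ Ω with r_z := dist(z,∂Ω) < r_o, every y ∈ ℝⁿ, R > 0 and u ∈ Lip_0(Ω), the pointwise Hardy inequality holds with the infimum coefficient: φ^-_{y,R}(|u(z)|) ≤ c₀ · (1 + a^-_{y,R} · (M_{2r_z}(|r_z ∇u|^p)(z))^{(q−p)/p}) · M_{2r_z}(|r_z ∇u|^p)(z), where φ^-_{y,R}(t) = t^p + a^-_{y,R} t^q. Then ℝⁿ∖Ω is locally uniformly infimally φ-fat with radius r_o and some constant c_fat = c_fat(n,p,q,c₀) > 0. -/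

import Mathlib

open MeasureTheory Metric Set

noncomputable section

/-- Euclidean space `ℝⁿ`. -/
abbrev En (n : ℕ) : Type := EuclideanSpace ℝ (Fin n)

/-- Norm of the (a.e. defined, by Rademacher's theorem) gradient of `u` at `x`. -/
def gnorm {n : ℕ} (u : En n → ℝ) (x : En n) : ℝ := ‖fderiv ℝ u x‖

/-- Admissible test functions for the level-`t` capacity of `E` in `O`:
Lipschitz on the closure of `O`, `u ≥ t` on `E`, `u = 0` on `∂O`. -/
def Adm {n : ℕ} (E O : Set (En n)) (t : ℝ) : Set (En n → ℝ) :=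
  {u | (∃ K, LipschitzOnWith K u (closure O)) ∧ (∀ x ∈ E, t ≤ u x) ∧
    ∀ x ∈ frontier O, u x = 0}

/-- Level-`t` variational capacity with integrand `ψ` and normalization `ψm`. -/
def capLevel {n : ℕ} (ψ : En n → ℝ → ℝ) (ψm : ℝ → ℝ)
    (E O : Set (En n)) (t : ℝ) : ℝ :=
  sInf ((fun u => ∫ x in O, ψ x (gnorm u x) / ψm t) '' Adm E O t)

/-- Infimal capacity with integrand `ψ` and normalization `ψm`. -/
def capInfGen {n : ℕ} (ψ : En n → ℝ → ℝ) (ψm : ℝ → ℝ) (E O : Set (En n)) : ℝ :=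
  ⨅ t : Ioi (0 : ℝ), capLevel ψ ψm E O (t : ℝ)

/-- The double-phase integrand `φ(x,t) = t^p + a(x) t^q`. -/
def phi {n : ℕ} (a : En n → ℝ) (p q : ℝ) (x : En n) (t : ℝ) : ℝ :=
  t ^ p + a x * t ^ q

/-- `a_O^- = inf_{x ∈ O} a(x)`. -/
def aInfOn {n : ℕ} (a : En n → ℝ) (O : Set (En n)) : ℝ := sInf (a '' O)

/-- `a_O^+ = sup_{x ∈ O} a(x)`. -/
def aSupOn {n : ℕ} (a : En n → ℝ) (O : Set (En n)) : ℝ := sSup (a '' O)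

/-- `φ_O^-(t) = t^p + a_O^- t^q`. -/
def phiMinus {n : ℕ} (a : En n → ℝ) (p q : ℝ) (O : Set (En n)) (t : ℝ) : ℝ :=
  t ^ p + aInfOn a O * t ^ q

/-- Level-`t` variational capacity for the double-phase integrand. -/
def capPhiLevel {n : ℕ} (a : En n → ℝ) (p q t : ℝ) (E O : Set (En n)) : ℝ :=
  capLevel (phi a p q) (phiMinus a p q O) E O t

/-- Infimal `φ`-capacity. -/
def capPhiInf {n : ℕ} (a : En n → ℝ) (p q : ℝ) (E O : Set (En n)) : ℝ :=
  ⨅ t : Ioi (0 : ℝ), capPhiLevel a p q (t : ℝ) E O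

/-- Variational `p`-capacity. -/
def capP {n : ℕ} (p : ℝ) (E O : Set (En n)) : ℝ :=
  sInf ((fun u => ∫ x in O, gnorm u x ^ p) '' Adm E O 1)

/-- The rescaled set `{x ∈ B̄(0,1/2) : z + r x ∈ E}`. -/
def shiftedSet {n : ℕ} (E : Set (En n)) (z : En n) (r : ℝ) : Set (En n) :=
  {x ∈ closedBall (0 : En n) (1 / 2) | z + r • x ∈ E}

/-- Local uniform infimal `φ`-fatness with parameters `cfat` and `ro`. -/
def LocUnifPhiFat {n : ℕ} (a : En n → ℝ) (p q : ℝ) (E : Set (En n))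
    (cfat ro : ℝ) : Prop :=
  ∀ z ∈ E, ∀ r : ℝ, 0 < r → r < ro →
    cfat ≤ capPhiInf (fun x => a (z + r • x)) p q (shiftedSet E z r) (ball (0 : En n) 1)

/-- Local uniform `p`-fatness with parameters `cfat` and `ro`. -/
def LocUnifPFat {n : ℕ} (p : ℝ) (E : Set (En n)) (cfat ro : ℝ) : Prop :=
  ∀ z ∈ E, ∀ r : ℝ, 0 < r → r < ro →
    cfat ≤ capP p (shiftedSet E z r) (ball (0 : En n) 1)

/-- `Lip_0(Ω)`: Lipschitz functions with compact support contained in `Ω`,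
extended by zero to `ℝⁿ`. -/
def Lip0 {n : ℕ} (Ω : Set (En n)) : Set (En n → ℝ) :=
  {u | (∃ K, LipschitzWith K u) ∧ HasCompactSupport u ∧ tsupport u ⊆ Ω}

/-- Restricted centered maximal operator `M_R f(x) = sup_{0<r<R} ⨍_{B(x,r)} |f|`. -/
def maxOp {n : ℕ} (R : ℝ) (f : En n → ℝ) (x : En n) : ℝ :=
  ⨆ r : Ioo (0 : ℝ) R, ⨍ y in ball x (r : ℝ), |f y|

section GradientNorm

variable {n : ℕ}

lemma gnorm_nonneg (u : En n → ℝ) (x : En n) : 0 ≤ gnorm u x := norm_nonneg _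

lemma measurable_gnorm (u : En n → ℝ) : Measurable (gnorm u) :=
  (measurable_fderiv ℝ u).norm

lemma Filter.EventuallyEq.gnorm_eq {u v : En n → ℝ} {x : En n} (h : u =ᶠ[nhds x] v) :
    gnorm u x = gnorm v x := by
  simp only [gnorm, h.fderiv_eq]

lemma gnorm_eq_zero_of_notMem_tsupport {u : En n → ℝ} {x : En n} (hx : x ∉ tsupport u) :
    gnorm u x = 0 := by
  have h : u =ᶠ[nhds x] fun _ => 0 := notMem_tsupport_iff_eventuallyEq.1 hx
  simp [gnorm, h.fderiv_eq]

/-- Composing with a `k`-Lipschitz function multiplies the gradient norm by at most `k`. -/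
lemma gnorm_comp_le {g : ℝ → ℝ} {k : NNReal} (hg : LipschitzWith k g) {u : En n → ℝ} {x : En n}
    (hu : DifferentiableAt ℝ u x) : gnorm (fun y => g (u y)) x ≤ k * gnorm u x := by
  by_cases hd : DifferentiableAt ℝ (fun y => g (u y)) x
  · refine le_of_forall_pos_le_add fun ε hε => ?_
    have hk : (0 : ℝ) < k + 1 := by positivity
    have hk' : (k : ℝ) * (gnorm u x + ε / (k + 1)) ≤ k * gnorm u x + ε := by
      rw [mul_add]
      gcongr
      rw [mul_div_assoc', div_le_iff₀ hk]
      nlinarith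
    refine le_trans ?_ hk'
    refine hd.hasFDerivAt.le_of_lip' (by have := gnorm_nonneg u x; positivity) ?_
    filter_upwards [hu.hasFDerivAt.isLittleO.def (c := ε / (k + 1)) (by positivity)] with y hy
    have h1 : ‖u y - u x‖ ≤ (gnorm u x + ε / (k + 1)) * ‖y - x‖ := by
      calc ‖u y - u x‖ = ‖(u y - u x - fderiv ℝ u x (y - x)) + fderiv ℝ u x (y - x)‖ := by simp
        _ ≤ ‖u y - u x - fderiv ℝ u x (y - x)‖ + ‖fderiv ℝ u x (y - x)‖ := norm_add_le _ _
        _ ≤ ε / (k + 1) * ‖y - x‖ + ‖fderiv ℝ u x‖ * ‖y - x‖ :=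
            add_le_add hy ((fderiv ℝ u x).le_opNorm _)
        _ = _ := by simp only [gnorm]; ring
    calc ‖g (u y) - g (u x)‖ ≤ k * ‖u y - u x‖ := hg.norm_sub_le _ _
      _ ≤ k * ((gnorm u x + ε / (k + 1)) * ‖y - x‖) := by gcongr
      _ = _ := by ring
  · rw [gnorm, fderiv_zero_of_not_differentiableAt hd, norm_zero]
    have := gnorm_nonneg u x
    positivity

lemma gnorm_comp_inv_smul_sub (w : En n → ℝ) {r : ℝ} (hr : 0 < r) (z x : En n) :
    gnorm (fun x => w (r⁻¹ • (x - z))) x = r⁻¹ * gnorm w (r⁻¹ • (x - z)) := by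
  have h1 : fderiv ℝ (fun x => w (r⁻¹ • (x - z))) x
      = fderiv ℝ (fun y => w (r⁻¹ • y)) (x - z) :=
    fderiv_comp_sub (f := fun y => w (r⁻¹ • y)) z
  rw [gnorm, h1, fderiv_comp_smul, norm_smul, gnorm, Real.norm_of_nonneg (by positivity)]

lemma integrable_gnorm_rpow {u : En n → ℝ} {K : NNReal} (hu : LipschitzWith K u)
    (hc : HasCompactSupport u) {p : ℝ} (hp : 0 < p) :
    Integrable (fun x => gnorm u x ^ p) := by
  refine (integrableOn_iff_integrable_of_support_subset (s := tsupport u) ?_).1 ?_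
  · intro x hx
    by_contra h
    exact hx (by simp [gnorm_eq_zero_of_notMem_tsupport h, Real.zero_rpow hp.ne'])
  · refine Measure.integrableOn_of_bounded (M := (K : ℝ) ^ p) hc.isCompact.measure_lt_top.ne
      ((measurable_gnorm u).pow_const p).aestronglyMeasurable (ae_of_all _ fun x => ?_)
    have := gnorm_nonneg u x
    rw [Real.norm_of_nonneg (by positivity)]
    exact Real.rpow_le_rpow this (norm_fderiv_le_of_lipschitz ℝ hu) hp.le

end GradientNorm

section Geometry

variable {n : ℕ}

lemma exists_mem_frontier_dist_le {S : Set (En n)} {x y : En n} (hx : x ∈ S) (hy : y ∉ S) :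
    ∃ s ∈ frontier S, dist x s ≤ dist x y := by
  obtain ⟨s, hs, hsf⟩ : ∃ s ∈ segment ℝ x y, s ∈ frontier S := by
    by_contra! h
    have hsub : segment ℝ x y ⊆ interior S ∪ interior Sᶜ := fun s hs => by
      have h1 := h s hs
      rw [frontier_eq_closure_inter_closure, mem_inter_iff, not_and_or] at h1
      rcases h1 with h1 | h1
      · exact Or.inr (by rwa [interior_compl])
      · exact Or.inl (by rwa [closure_compl, mem_compl_iff, not_not] at h1)
    have hdisj : Disjoint (interior S) (interior Sᶜ) :=
      disjoint_compl_right.mono interior_subset interior_subset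
    have hxi : x ∈ interior S := (hsub (left_mem_segment ℝ x y)).resolve_right
      fun h' => interior_subset h' hx
    have := (convex_segment x y).isPreconnected.subset_left_of_subset_union isOpen_interior
      isOpen_interior hdisj hsub ⟨x, left_mem_segment ℝ x y, hxi⟩
    exact hy (interior_subset (this (right_mem_segment ℝ x y)))
  refine ⟨s, hsf, ?_⟩
  have := dist_add_dist_of_mem_segment hs
  linarith [dist_nonneg (x := s) (y := y)]

/-- A Vitali covering estimate comparing Lebesgue measure with a second measure. -/
lemma volume_le_of_forall_ball_le (ν : Measure (En n)) (A : Set (En n)) (s : En n → ℝ)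
    (R : ℝ) (c : ENNReal) (hs : ∀ x ∈ A, 0 < s x) (hR : ∀ x ∈ A, s x ≤ R)
    (h : ∀ x ∈ A, volume (ball x (s x)) ≤ c * ν (ball x (s x))) :
    volume A ≤ ENNReal.ofReal (5 ^ n) * c * ν univ := by
  obtain ⟨t, htA, hdisj, hcov⟩ :=
    Vitali.exists_disjoint_subfamily_covering_enlargement_closedBall A id s R hR 5 (by norm_num)
  have htc : t.Countable := hdisj.countable_of_nonempty_interior fun x hx =>
    ⟨x, ball_subset_interior_closedBall (mem_ball_self (hs x (htA hx)))⟩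
  have hsub : A ⊆ ⋃ b ∈ t, closedBall b (5 * s b) := fun x hx => by
    obtain ⟨b, hb, hxb⟩ := hcov x hx
    exact mem_biUnion hb (hxb (mem_closedBall_self (hs x hx).le))
  have hdisj' : t.PairwiseDisjoint fun x => ball x (s x) :=
    fun x hx y hy hxy => (hdisj hx hy hxy).mono ball_subset_closedBall ball_subset_closedBall
  calc volume A ≤ ∑' b : t, volume (closedBall (b : En n) (5 * s b)) :=
        (measure_mono hsub).trans (measure_biUnion_le _ htc _)
    _ ≤ ∑' b : t, ENNReal.ofReal (5 ^ n) * c * ν (ball (b : En n) (s b)) := by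
        refine ENNReal.tsum_le_tsum fun b => ?_
        have hb := htA b.2
        have h5 : volume (closedBall (b : En n) (5 * s b))
            = ENNReal.ofReal (5 ^ n) * volume (ball (b : En n) (s b)) := by
          rw [Measure.addHaar_closedBall_mul volume _ (by norm_num) (hs b hb).le,
            Measure.addHaar_closedBall volume _ (hs b hb).le,
            Measure.addHaar_ball_of_pos volume _ (hs b hb), finrank_euclideanSpace_fin]
        rw [h5, mul_assoc]
        gcongr
        exact h b hb
    _ = ENNReal.ofReal (5 ^ n) * c * ν (⋃ b ∈ t, ball b (s b)) := by
        rw [ENNReal.tsum_mul_left, measure_biUnion htc hdisj' fun _ _ => measurableSet_ball]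
    _ ≤ _ := by gcongr; exact subset_univ _

/-- A Poincaré-type inequality for Lipschitz functions vanishing off a ball. -/
lemma integral_le_mul_integral_gnorm (hn : 0 < n) {U : En n → ℝ} {K : NNReal}
    (hU : LipschitzWith K U) {z : En n} {r : ℝ} (h0 : tsupport U ⊆ closedBall z r) :
    ∫ x, U x ≤ r * ∫ x, gnorm U x := by
  have hc : HasCompactSupport U := (isCompact_closedBall z r).of_isClosed_subset
    (isClosed_tsupport U) h0
  let e : En n := EuclideanSpace.single ⟨0, hn⟩ 1
  have he : ‖e‖ = 1 := by simp [e]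
  have hf : LipschitzWith 1 fun x : En n => inner ℝ e (x - z) :=
    LipschitzWith.of_dist_le_mul fun x y => by
      rw [Real.dist_eq, ← inner_sub_right, sub_sub_sub_cancel_right]
      refine (abs_real_inner_le_norm _ _).trans ?_
      rw [he, dist_eq_norm, NNReal.coe_one]
  have hl : ∀ x, lineDeriv ℝ (fun x : En n => inner ℝ e (x - z)) x e = 1 := fun x => by
    have : HasFDerivAt (fun x : En n => inner ℝ e (x - z)) (innerSL ℝ e) x := by
      exact (innerSL ℝ e).hasFDerivAt.comp x ((hasFDerivAt_id x).sub_const z)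
    rw [this.differentiableAt.lineDeriv_eq_fderiv, this.fderiv, innerSL_apply_apply,
      real_inner_self_eq_norm_sq, he, one_pow]
  have key := hf.integral_lineDeriv_mul_eq hU hc e (μ := volume)
  simp only [hl, one_mul] at key
  rw [key, ← integral_const_mul]
  have hint : Integrable (gnorm U) := by
    simpa using integrable_gnorm_rpow hU hc (p := 1) one_pos
  refine (Real.le_norm_self _).trans (norm_integral_le_of_norm_le (hint.const_mul r) ?_)
  filter_upwards [hU.ae_differentiableAt] with x hx
  rw [norm_mul, hx.lineDeriv_eq_fderiv, mul_comm]
  by_cases hxt : x ∈ tsupport U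
  · have h1 : ‖inner ℝ e (x - z)‖ ≤ r := by
      refine (norm_inner_le_norm _ _).trans ?_
      rw [he, one_mul, ← dist_eq_norm]
      exact h0 hxt
    have h2 : ‖fderiv ℝ U x (-e)‖ ≤ gnorm U x := by
      have := (fderiv ℝ U x).le_opNorm (-e)
      rwa [norm_neg, he, mul_one] at this
    exact mul_le_mul h1 h2 (norm_nonneg _) ((norm_nonneg _).trans h1)
  · have h1 : gnorm U x = 0 := gnorm_eq_zero_of_notMem_tsupport hxt
    rw [h1, norm_eq_zero.1 h1]
    simp

end Geometry

section CapacityEstimate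

variable {n : ℕ}

lemma rpow_le_rpow_add_mul_rpow {s d p q : ℝ} (hs : 0 ≤ s) (hd : 0 < d) (hp : 0 < p)
    (hpq : p ≤ q) : s ^ p ≤ d ^ p + d ^ (p - q) * s ^ q := by
  rcases le_total s d with h | h
  · have := Real.rpow_le_rpow hs h hp.le
    have : 0 ≤ d ^ (p - q) * s ^ q := by positivity
    linarith
  · have hs' : 0 < s := hd.trans_le h
    have h1 : s ^ (p - q) ≤ d ^ (p - q) :=
      Real.rpow_le_rpow_of_nonpos hd h (by linarith)
    have h2 : s ^ p = s ^ (p - q) * s ^ q := by rw [← Real.rpow_add hs']; ring_nf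
    have h3 : s ^ (p - q) * s ^ q ≤ d ^ (p - q) * s ^ q := by gcongr
    have : 0 ≤ d ^ p := by positivity
    linarith

/-- The pointwise Hardy inequality with exponent `p` in an open set `Ω`, written with an explicit
radius in place of the maximal function. -/
def BallHardy (Ω : Set (En n)) (p C ro : ℝ) : Prop :=
  ∀ x ∈ Ω, infDist x (frontier Ω) < ro → ∀ v ∈ Lip0 Ω, v x ≠ 0 →
    ∃ s ∈ Ioo 0 (2 * infDist x (frontier Ω)),
      |v x| ^ p * volume.real (ball x s) ≤
        C * infDist x (frontier Ω) ^ p * ∫ y in ball x s, gnorm v y ^ p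

/-- The cutoff of `1 - U` used as a test function in the Hardy inequality. -/
lemma exists_mem_Lip0_eqOn {Ω : Set (En n)} {z : En n} {r : ℝ} (hr : 0 < r) {U : En n → ℝ}
    {K : NNReal} (hU : LipschitzWith K U) (hU0 : ∀ x, 0 ≤ U x)
    (hU1 : ∀ x ∈ closedBall z (r / 2), x ∉ Ω → 1 ≤ U x) :
    ∃ v ∈ Lip0 Ω, EqOn v (fun x => max (3 / 4 - U x) 0) (ball z (3 * r / 8)) := by
  let w : En n → ℝ := fun x => min (4 - 8 / r * dist x z) (1 - U x)
  have hcut : LipschitzWith (Real.toNNReal (8 / r)) fun x : En n => 4 - 8 / r * dist x z :=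
    LipschitzWith.of_dist_le_mul fun x y => by
      rw [Real.dist_eq, Real.coe_toNNReal _ (by positivity), sub_sub_sub_cancel_left, ← mul_sub,
        abs_mul, abs_of_nonneg (by positivity : (0 : ℝ) ≤ 8 / r), abs_sub_comm]
      gcongr
      exact abs_dist_sub_le x y z
  have hw := hcut.min ((LipschitzWith.const (1 : ℝ)).sub hU)
  have hsupp : tsupport (fun x => max (w x - 1 / 4) 0) ⊆ {x | 1 / 4 ≤ w x} := by
    refine closure_minimal (fun x hx => ?_) (isClosed_le continuous_const hw.continuous)
    by_contra h
    exact hx (max_eq_right (by simp only [mem_ofPred_eq, not_le] at h; linarith))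
  have hball : {x | 1 / 4 ≤ w x} ⊆ closedBall z (r / 2) := fun x hx => by
    have h1 : 1 / 4 ≤ 4 - 8 / r * dist x z := (le_min_iff.1 hx).1
    have h2 : 8 / r * dist x z ≤ 4 := by linarith
    rw [div_mul_eq_mul_div, div_le_iff₀ hr] at h2
    rw [mem_closedBall]
    linarith
  refine ⟨fun x => max (w x - 1 / 4) 0,
    ⟨⟨_, (hw.sub (LipschitzWith.const (1 / 4 : ℝ))).max_const 0⟩,
    (isCompact_closedBall z (r / 2)).of_isClosed_subset (isClosed_tsupport _)
      (hsupp.trans hball), fun x hx => ?_⟩, fun x hx => ?_⟩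
  · by_contra h
    have h1 := hU1 x (hball (hsupp hx)) h
    have h2 : 1 / 4 ≤ 1 - U x := (le_min_iff.1 (hsupp hx)).2
    linarith
  · have h1 : 8 / r * dist x z ≤ 3 := by
      rw [div_mul_eq_mul_div, div_le_iff₀ hr]
      linarith [mem_ball.1 hx]
    have h2 : w x = 1 - U x := min_eq_right (by linarith [hU0 x])
    simp only [h2]
    ring_nf

lemma BallHardy.volume_le {Ω : Set (En n)} {p C ro : ℝ} (hp : 0 < p) (hC : 0 < C)
    (H : BallHardy Ω p C ro) {z : En n} (hz : z ∉ Ω) {r : ℝ} (hr : 0 < r) (hrro : r < ro)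
    {U : En n → ℝ} {K : NNReal} (hU : LipschitzWith K U) (hUc : HasCompactSupport U)
    (hU0 : ∀ x, 0 ≤ U x) (hU1 : ∀ x ∈ closedBall z (r / 2), x ∉ Ω → 1 ≤ U x) :
    volume.real (ball z (r / 8) ∩ {x | U x < 1 / 2}) ≤
      5 ^ n * 4 ^ p * C * (r ^ p * ∫ x, gnorm U x ^ p) := by
  obtain ⟨v, hv, hvU⟩ := exists_mem_Lip0_eqOn hr hU hU0 hU1
  have hint := integrable_gnorm_rpow hU hUc hp
  have hnn : ∀ x, 0 ≤ gnorm U x ^ p := fun x => Real.rpow_nonneg (gnorm_nonneg U x) p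
  have hgrad : ∀ᵐ x, x ∈ ball z (3 * r / 8) → gnorm v x ^ p ≤ gnorm U x ^ p := by
    filter_upwards [hU.ae_differentiableAt] with x hx hxb
    refine Real.rpow_le_rpow (gnorm_nonneg v x) ?_ hp.le
    have hev : v =ᶠ[nhds x] fun x => max (3 / 4 - U x) 0 :=
      hvU.eventuallyEq_of_mem (isOpen_ball.mem_nhds hxb)
    have hg : LipschitzWith 1 fun s : ℝ => max (3 / 4 - s) 0 :=
      ((LipschitzWith.const (3 / 4 : ℝ)).sub LipschitzWith.id).max_const 0 |>.weaken (by simp)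
    rw [hev.gnorm_eq]
    simpa using gnorm_comp_le hg hx
  have key : ∀ x ∈ ball z (r / 8) ∩ {x | U x < 1 / 2}, ∃ s : ℝ, 0 < s ∧ s ≤ r ∧
      volume.real (ball x s) ≤ 4 ^ p * C * r ^ p * ∫ y in ball x s, gnorm U y ^ p := by
    rintro x ⟨hxb, hxU⟩
    simp only [mem_ofPred_eq] at hxU
    have hxb' : dist x z < r / 8 := hxb
    have hxΩ : x ∈ Ω := by
      by_contra h
      have := hU1 x (by rw [mem_closedBall]; linarith) h
      linarith
    obtain ⟨y, hy, hxy⟩ := exists_mem_frontier_dist_le hxΩ hz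
    have hd : infDist x (frontier Ω) < r / 8 :=
      ((infDist_le_dist_of_mem hy).trans hxy).trans_lt hxb'
    have hd0 : 0 ≤ infDist x (frontier Ω) := infDist_nonneg
    have hvx : 1 / 4 ≤ v x := by
      rw [hvU (mem_ball.2 (by linarith))]
      exact le_max_of_le_left (by linarith)
    obtain ⟨s, ⟨hs0, hs⟩, hle⟩ := H x hxΩ (by linarith) v hv (by linarith)
    refine ⟨s, hs0, by linarith, ?_⟩
    have hsub : ball x s ⊆ ball z (3 * r / 8) := ball_subset_ball' (by linarith)
    have h1 : ∫ y in ball x s, gnorm v y ^ p ≤ ∫ y in ball x s, gnorm U y ^ p :=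
      integral_mono_of_nonneg (ae_of_all _ fun y => Real.rpow_nonneg (gnorm_nonneg v y) p)
        hint.integrableOn (by
          filter_upwards [ae_restrict_of_ae hgrad, ae_restrict_mem measurableSet_ball]
            with y hy hyb using hy (hsub hyb))
    have h2 : infDist x (frontier Ω) ^ p ≤ r ^ p := Real.rpow_le_rpow hd0 (by linarith) hp.le
    have h3 : (1 / 4 : ℝ) ^ p ≤ |v x| ^ p :=
      Real.rpow_le_rpow (by norm_num) (hvx.trans (le_abs_self _)) hp.le
    have h4 : (4 : ℝ) ^ p * (1 / 4) ^ p = 1 := by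
      rw [← Real.mul_rpow (by norm_num) (by norm_num)]; norm_num
    have h5 : 0 ≤ ∫ y in ball x s, gnorm v y ^ p :=
      integral_nonneg fun y => Real.rpow_nonneg (gnorm_nonneg v y) p
    calc volume.real (ball x s) = 4 ^ p * ((1 / 4) ^ p * volume.real (ball x s)) := by
          rw [← mul_assoc, h4, one_mul]
      _ ≤ 4 ^ p * (|v x| ^ p * volume.real (ball x s)) := by gcongr
      _ ≤ 4 ^ p * (C * r ^ p * ∫ y in ball x s, gnorm U y ^ p) := by
          gcongr 4 ^ p * ?_
          exact hle.trans (by gcongr)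
      _ = _ := by ring
  choose! s hs0 hsr hs using key
  let ν : Measure (En n) := volume.withDensity fun x => ENNReal.ofReal (gnorm U x ^ p)
  have hν : ∀ t, MeasurableSet t → ν t = ENNReal.ofReal (∫ y in t, gnorm U y ^ p) :=
    fun t ht => by
      rw [withDensity_apply _ ht,
        ofReal_integral_eq_lintegral_ofReal hint.integrableOn (ae_of_all _ hnn)]
  have hcov := volume_le_of_forall_ball_le ν _ s r (ENNReal.ofReal (4 ^ p * C * r ^ p)) hs0 hsr
    fun x hx => by
      rw [hν _ measurableSet_ball, ← ENNReal.ofReal_mul (by positivity),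
        ← ofReal_measureReal measure_ball_lt_top.ne]
      exact ENNReal.ofReal_le_ofReal (hs x hx)
  have hI : 0 ≤ ∫ x, gnorm U x ^ p := integral_nonneg hnn
  rw [hν _ MeasurableSet.univ, setIntegral_univ, ← ENNReal.ofReal_mul (by positivity),
    ← ENNReal.ofReal_mul (by positivity)] at hcov
  exact (ENNReal.toReal_le_of_le_ofReal (by positivity) hcov).trans_eq (by ring)

/-- The constant in the lower bound for the `p`-energy. -/
def energyConst (n : ℕ) (p C : ℝ) : ℝ :=
  volume.real (ball (0 : En n) 1) * (1 / 8) ^ n / 2 /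
    (5 ^ n * 4 ^ p * C + 2 * ((1 / 8) ^ n / 4) ^ (1 - p))

lemma volume_real_unitBall_pos : 0 < volume.real (ball (0 : En n) 1) :=
  ENNReal.toReal_pos (measure_ball_pos _ _ one_pos).ne' measure_ball_lt_top.ne

lemma energyConst_pos {p C : ℝ} (hC : 0 < C) : 0 < energyConst n p C := by
  have := volume_real_unitBall_pos (n := n)
  unfold energyConst
  positivity

lemma BallHardy.energy_ge (hn : 0 < n) {Ω : Set (En n)} {p C ro : ℝ} (hp : 1 < p) (hC : 0 < C)
    (H : BallHardy Ω p C ro) {z : En n} (hz : z ∉ Ω) {r : ℝ} (hr : 0 < r) (hrro : r < ro)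
    {U : En n → ℝ} {K : NNReal} (hU : LipschitzWith K U) (hUs : tsupport U ⊆ closedBall z r)
    (hU0 : ∀ x, 0 ≤ U x) (hU1 : ∀ x ∈ closedBall z (r / 2), x ∉ Ω → 1 ≤ U x) :
    energyConst n p C * r ^ n ≤ r ^ p * ∫ x, gnorm U x ^ p := by
  have hp0 : 0 < p := one_pos.trans hp
  have hUc : HasCompactSupport U := (isCompact_closedBall z r).of_isClosed_subset
    (isClosed_tsupport U) hUs
  have hint := integrable_gnorm_rpow hU hUc hp0
  have hint1 : Integrable (gnorm U) := by
    simpa using integrable_gnorm_rpow hU hUc (p := 1) one_pos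
  set I := ∫ x, gnorm U x ^ p
  set ω := volume.real (ball (0 : En n) 1)
  set d : ℝ := (1 / 8) ^ n / 4 with hd
  have hd0 : 0 < d := by positivity
  have h1 := H.volume_le hp0 hC hz hr hrro hU hUc hU0 hU1
  have h2 : 1 / 2 * volume.real {x | 1 / 2 ≤ U x} ≤ ∫ x, U x :=
    mul_meas_ge_le_integral_of_nonneg (ae_of_all _ hU0)
      (hU.continuous.integrable_of_hasCompactSupport hUc) _
  have h3 := integral_le_mul_integral_gnorm hn hU hUs
  have hcb : volume.real (closedBall z r) = r ^ n * ω := by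
    rw [Measure.addHaar_real_closedBall volume z hr.le, finrank_euclideanSpace_fin]
  have h4 : r * ∫ x, gnorm U x ≤ d * (r ^ n * ω) + d ^ (1 - p) * (r ^ p * I) := by
    have hset : ∀ {f : En n → ℝ}, (∀ x, x ∉ tsupport U → f x = 0) →
        ∫ x, f x = ∫ x in closedBall z r, f x := fun hf =>
      (setIntegral_eq_integral_of_forall_compl_eq_zero fun x hx => hf x fun h => hx (hUs h)).symm
    have hI : I = ∫ x in closedBall z r, gnorm U x ^ p := hset fun x hx => by
      rw [gnorm_eq_zero_of_notMem_tsupport hx, Real.zero_rpow hp0.ne']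
    rw [hset fun x hx => gnorm_eq_zero_of_notMem_tsupport hx, hI, ← hcb, ← integral_const_mul,
      ← integral_const_mul, ← integral_const_mul, mul_comm d, ← smul_eq_mul (volume.real _),
      ← setIntegral_const]
    have hc : IntegrableOn (fun _ => d) (closedBall z r) volume :=
      integrableOn_const measure_closedBall_lt_top.ne
    have hi : IntegrableOn (fun x => d ^ (1 - p) * (r ^ p * gnorm U x ^ p)) (closedBall z r) :=
      ((hint.const_mul _).const_mul _).integrableOn
    rw [← integral_add hc hi]
    refine integral_mono (hint1.const_mul r).integrableOn (hc.add hi) fun x => ?_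
    have hg := gnorm_nonneg U x
    have := rpow_le_rpow_add_mul_rpow (mul_nonneg hr.le hg) hd0 one_pos hp.le
    rwa [Real.rpow_one, Real.rpow_one, Real.mul_rpow hr.le hg] at this
  have h5 : (r / 8) ^ n * ω ≤ volume.real (ball z (r / 8) ∩ {x | U x < 1 / 2})
      + volume.real {x | 1 / 2 ≤ U x} := by
    have hb : volume.real (ball z (r / 8)) = (r / 8) ^ n * ω := by
      rw [measureReal_def, Measure.addHaar_ball_of_pos volume z (by positivity),
        finrank_euclideanSpace_fin, ENNReal.toReal_mul, ENNReal.toReal_ofReal (by positivity)]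
      rfl
    have hfin : volume {x | 1 / 2 ≤ U x} ≠ ⊤ :=
      ((measure_mono fun x (hx : 1 / 2 ≤ U x) => hUs (subset_tsupport _ fun h => by
        linarith)).trans_lt measure_closedBall_lt_top).ne
    rw [← hb]
    refine (measureReal_mono ?_ ?_).trans (measureReal_union_le _ _)
    · intro x hx
      rcases lt_or_ge (U x) (1 / 2) with h | h
      exacts [Or.inl ⟨hx, h⟩, Or.inr h]
    · exact (measure_union_lt_top ((measure_mono inter_subset_left).trans_lt measure_ball_lt_top)
        hfin.lt_top).ne
  have h6 : (r / 8) ^ n = r ^ n * (4 * d) := by rw [hd, div_eq_mul_one_div, mul_pow]; ring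
  have hD : 0 < 5 ^ n * 4 ^ p * C + 2 * d ^ (1 - p) := by positivity
  have h7 : energyConst n p C * r ^ n =
      r ^ n * (2 * d) * ω / (5 ^ n * 4 ^ p * C + 2 * d ^ (1 - p)) := by
    rw [energyConst]
    ring
  rw [h7, div_le_iff₀ hD]
  rw [h6] at h5
  linarith

end CapacityEstimate

section DoublePhase

variable {n : ℕ}

/-- The double-phase Hardy inequality with a fixed coefficient `m` contains the one for `t ^ p`. -/
lemma rpow_le_of_doublePhase_le {p q c m s M : ℝ} (hp : 0 < p) (hpq : p < q) (hm : 0 ≤ m)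
    (hs : 0 < s) (hM : 0 ≤ M)
    (h : s ^ p + m * s ^ q ≤ c * (1 + m * M ^ ((q - p) / p)) * M) : s ^ p ≤ max c 1 * M := by
  by_contra! hlt
  have hMs : M ≤ s ^ p := (le_mul_of_one_le_left hM (le_max_right c 1)).trans hlt.le
  have h1 : M ^ ((q - p) / p) ≤ s ^ (q - p) := by
    refine (Real.rpow_le_rpow hM hMs (div_nonneg (by linarith) hp.le)).trans_eq ?_
    rw [← Real.rpow_mul hs.le, mul_div_cancel₀ _ hp.ne']
  have h2 : s ^ q = s ^ (q - p) * s ^ p := by rw [← Real.rpow_add hs]; ring_nf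
  have h3 : c * M < s ^ p := (mul_le_mul_of_nonneg_right (le_max_left c 1) hM).trans_lt hlt
  have h4 : 0 < 1 + m * M ^ ((q - p) / p) := by positivity
  have h5 : c * (1 + m * M ^ ((q - p) / p)) * M < (1 + m * M ^ ((q - p) / p)) * s ^ p := by
    nlinarith
  have h6 : (1 + m * M ^ ((q - p) / p)) * s ^ p ≤ (1 + m * s ^ (q - p)) * s ^ p := by
    gcongr
  rw [h2] at h
  linarith

lemma aInfOn_nonneg {a : En n → ℝ} (ha : ∀ x, 0 ≤ a x) (O : Set (En n)) : 0 ≤ aInfOn a O :=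
  Real.sInf_nonneg fun _ ⟨x, _, hx⟩ => hx ▸ ha x

lemma aInfOn_le {a : En n → ℝ} (ha : ∀ x, 0 ≤ a x) {O : Set (En n)} {x : En n} (hx : x ∈ O) :
    aInfOn a O ≤ a x :=
  csInf_le ⟨0, fun _ ⟨y, _, hy⟩ => hy ▸ ha y⟩ (mem_image_of_mem a hx)

/-- Extraction of a radius from a pointwise bound by the maximal function. -/
lemma exists_ball_of_rpow_le_maxOp {p C d s : ℝ} (hC : 0 < C) (hd : 0 ≤ d)
    (hs : 0 < s) {v : En n → ℝ} {x : En n}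
    (h : s ^ p ≤ C * maxOp (2 * d) (fun y => (d * gnorm v y) ^ p) x) :
    ∃ r ∈ Ioo 0 (2 * d),
      s ^ p * volume.real (ball x r) ≤ 2 * C * d ^ p * ∫ y in ball x r, gnorm v y ^ p := by
  have hsp : 0 < s ^ p := Real.rpow_pos_of_pos hs p
  have hlt : s ^ p / (2 * C) < maxOp (2 * d) (fun y => (d * gnorm v y) ^ p) x := by
    rw [div_lt_iff₀ (by positivity)]
    linarith
  have : Nonempty (Ioo (0 : ℝ) (2 * d)) := by
    by_contra hne
    rw [not_nonempty_iff] at hne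
    rw [maxOp, Real.iSup_of_isEmpty] at hlt
    exact absurd hlt (not_lt.2 (by positivity))
  obtain ⟨⟨r, hr⟩, hlt⟩ := exists_lt_of_lt_ciSup hlt
  refine ⟨r, hr, ?_⟩
  have hV : 0 < volume.real (ball x r) :=
    ENNReal.toReal_pos (measure_ball_pos _ _ hr.1).ne' measure_ball_lt_top.ne
  have habs : ∀ y, |(d * gnorm v y) ^ p| = d ^ p * gnorm v y ^ p := fun y => by
    have := gnorm_nonneg v y
    rw [abs_of_nonneg (by positivity), Real.mul_rpow hd this]
  simp only [habs, setAverage_eq, integral_const_mul, smul_eq_mul] at hlt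
  rw [div_lt_iff₀ (by positivity), ← div_eq_inv_mul, div_mul_eq_mul_div, lt_div_iff₀ hV] at hlt
  linarith

lemma ballHardy_of_doublePhase {p q c ro : ℝ} (hp : 0 < p) (hpq : p < q) {a : En n → ℝ}
    (ha : ∀ x, 0 ≤ a x) {Ω : Set (En n)}
    (H : ∀ z ∈ Ω, ∀ rz : ℝ, rz = infDist z (frontier Ω) → rz < ro →
      ∀ (y : En n) (R : ℝ), 0 < R → ∀ u ∈ Lip0 Ω,
        |u z| ^ p + aInfOn a (ball y R) * |u z| ^ q ≤
          c * (1 + aInfOn a (ball y R) *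
                (maxOp (2 * rz) (fun x => (rz * gnorm u x) ^ p) z) ^ ((q - p) / p)) *
            maxOp (2 * rz) (fun x => (rz * gnorm u x) ^ p) z) :
    BallHardy Ω p (2 * max c 1) ro := fun x hx hxr v hv hvx => by
  refine exists_ball_of_rpow_le_maxOp (by positivity) infDist_nonneg (abs_pos.2 hvx) ?_
  refine rpow_le_of_doublePhase_le hp hpq (aInfOn_nonneg ha (ball 0 1)) (abs_pos.2 hvx) ?_
    (H x hx _ rfl hxr 0 1 one_pos v hv)
  exact Real.iSup_nonneg fun r => by
    rw [setAverage_eq]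
    exact mul_nonneg (by positivity) (integral_nonneg fun _ => abs_nonneg _)

lemma LipschitzOnWith.indicator_of_frontier {S : Set (En n)} {f : En n → ℝ} {K : NNReal}
    (hf : LipschitzOnWith K f (closure S)) (h0 : ∀ x ∈ frontier S, f x = 0) :
    LipschitzWith K (S.indicator f) := by
  have key : ∀ x y, x ∈ S → y ∉ S → |f x| ≤ K * dist x y := fun x y hx hy => by
    obtain ⟨s, hs, hxs⟩ := exists_mem_frontier_dist_le hx hy
    have := hf.dist_le_mul x (subset_closure hx) s (frontier_subset_closure hs)
    rw [h0 s hs, Real.dist_eq, sub_zero] at this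
    exact this.trans (by gcongr)
  refine LipschitzWith.of_dist_le_mul fun x y => ?_
  by_cases hx : x ∈ S <;> by_cases hy : y ∈ S
  · rw [indicator_of_mem hx, indicator_of_mem hy]
    exact hf.dist_le_mul x (subset_closure hx) y (subset_closure hy)
  · rw [indicator_of_mem hx, indicator_of_notMem hy, Real.dist_eq, sub_zero]
    exact key x y hx hy
  · rw [indicator_of_notMem hx, indicator_of_mem hy, Real.dist_eq, zero_sub, abs_neg, dist_comm]
    exact key y x hy hx
  · rw [indicator_of_notMem hx, indicator_of_notMem hy, dist_self]
    positivity

lemma integral_gnorm_rescale_rpow (w : En n → ℝ) {r p : ℝ} (hr : 0 < r) (z : En n) :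
    r ^ p * ∫ x, gnorm (fun x => w (r⁻¹ • (x - z))) x ^ p = r ^ n * ∫ x, gnorm w x ^ p := by
  have h1 : ∀ x, gnorm (fun x => w (r⁻¹ • (x - z))) x ^ p
      = (r ^ p)⁻¹ * gnorm w (r⁻¹ • (x - z)) ^ p := fun x => by
    rw [gnorm_comp_inv_smul_sub w hr, Real.mul_rpow (by positivity) (gnorm_nonneg _ _),
      Real.inv_rpow hr.le]
  have hrp : r ^ p ≠ 0 := (Real.rpow_pos_of_pos hr p).ne'
  rw [integral_congr_ae (ae_of_all _ h1), integral_const_mul, mul_inv_cancel_left₀ hrp,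
    integral_sub_right_eq_self (fun x => gnorm w (r⁻¹ • x) ^ p) z,
    Measure.integral_comp_smul volume (fun x => gnorm w x ^ p), finrank_euclideanSpace_fin,
    smul_eq_mul, inv_pow, inv_inv, abs_of_nonneg (by positivity)]

/-- The lower bound for the `p`-energy of an admissible function for the capacity. -/
lemma BallHardy.energyConst_le (hn : 0 < n) {Ω : Set (En n)} {p C ro : ℝ} (hp : 1 < p)
    (hC : 0 < C) (H : BallHardy Ω p C ro) {z : En n} (hz : z ∉ Ω) {r : ℝ} (hr : 0 < r)
    (hrro : r < ro) {t : ℝ} (ht : 0 < t) {u : En n → ℝ}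
    (hu : u ∈ Adm (shiftedSet Ωᶜ z r) (ball 0 1) t) :
    energyConst n p C ≤ ∫ x in ball (0 : En n) 1, (gnorm u x / t) ^ p := by
  obtain ⟨⟨K, huK⟩, hut, hu0⟩ := hu
  have hp0 : 0 < p := one_pos.trans hp
  have hcl : closure (ball (0 : En n) 1) = closedBall 0 1 := closure_ball 0 one_ne_zero
  have hg : LipschitzWith (Real.toNNReal t⁻¹) fun s : ℝ => max (s / t) 0 :=
    LipschitzWith.max_const (LipschitzWith.of_dist_le_mul fun x y => by
      rw [Real.dist_eq, Real.dist_eq, Real.coe_toNNReal _ (by positivity), ← sub_div, abs_div,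
        abs_of_pos ht, div_eq_inv_mul]) 0
  let w : En n → ℝ := (ball (0 : En n) 1).indicator fun x => max (u x / t) 0
  have hw := LipschitzOnWith.indicator_of_frontier (hg.comp_lipschitzOnWith huK)
    fun x hx => by simp [hu0 x hx]
  change LipschitzWith _ w at hw
  have hws : tsupport w ⊆ closedBall 0 1 := by
    rw [← hcl]
    exact closure_mono support_indicator_subset
  have hw0 : ∀ x, 0 ≤ w x := indicator_nonneg fun x _ => le_max_right _ _
  have hgrad : ∀ᵐ x ∂volume.restrict (ball (0 : En n) 1), gnorm w x ≤ gnorm u x / t := by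
    filter_upwards [(huK.mono subset_closure).ae_differentiableWithinAt measurableSet_ball,
      ae_restrict_mem measurableSet_ball] with x hx hxb
    have hnhds : ball (0 : En n) 1 ∈ nhds x := isOpen_ball.mem_nhds hxb
    have hev : w =ᶠ[nhds x] fun y => max (u y / t) 0 :=
      (eqOn_indicator (s := ball (0 : En n) 1)).eventuallyEq_of_mem hnhds
    rw [hev.gnorm_eq]
    have := gnorm_comp_le hg (hx.differentiableAt hnhds)
    rwa [Real.coe_toNNReal _ (by positivity), ← div_eq_inv_mul] at this
  have hψ : LipschitzWith (Real.toNNReal r⁻¹) fun x : En n => r⁻¹ • (x - z) :=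
    LipschitzWith.of_dist_le_mul fun x y => by
      rw [Real.coe_toNNReal _ (by positivity), dist_smul₀, dist_sub_right,
        Real.norm_of_nonneg (by positivity)]
  have hnorm : ∀ x : En n, ‖r⁻¹ • (x - z)‖ = dist x z / r := fun x => by
    rw [norm_smul, Real.norm_of_nonneg (by positivity), dist_eq_norm, div_eq_inv_mul]
  have key := H.energy_ge hn hp hC hz hr hrro (hw.comp hψ) ?_ (fun x => hw0 _) ?_
  · have hres := integral_gnorm_rescale_rpow w (p := p) hr z
    simp only [Function.comp_def] at key
    rw [hres, mul_comm] at key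
    have h1 : energyConst n p C ≤ ∫ x, gnorm w x ^ p := le_of_mul_le_mul_left key (by positivity)
    have h2 : ∫ x, gnorm w x ^ p = ∫ x in ball (0 : En n) 1, gnorm w x ^ p := by
      have hae : closedBall (0 : En n) 1 =ᵐ[volume] ball (0 : En n) 1 := by
        rw [← ball_union_sphere]
        exact union_ae_eq_left_of_ae_eq_empty
          (ae_eq_empty.2 (Measure.addHaar_sphere_of_ne_zero volume 0 one_ne_zero))
      rw [← setIntegral_congr_set hae]
      refine (setIntegral_eq_integral_of_forall_compl_eq_zero fun x hx => ?_).symm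
      rw [gnorm_eq_zero_of_notMem_tsupport fun h => hx (hws h), Real.zero_rpow hp0.ne']
    rw [h2] at h1
    refine h1.trans (integral_mono_of_nonneg
      (ae_of_all _ fun x => Real.rpow_nonneg (gnorm_nonneg w x) p) ?_ ?_)
    · refine Measure.integrableOn_of_bounded (M := (K / t : ℝ) ^ p) measure_ball_lt_top.ne
        (((measurable_gnorm u).div_const t).pow_const p).aestronglyMeasurable ?_
      filter_upwards [ae_restrict_mem measurableSet_ball] with x hx
      have := gnorm_nonneg u x
      rw [Real.norm_of_nonneg (by positivity)]
      gcongr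
      exact norm_fderiv_le_of_lipschitzOn ℝ (isOpen_ball.mem_nhds hx) (huK.mono subset_closure)
    · filter_upwards [hgrad] with x hx
      exact Real.rpow_le_rpow (gnorm_nonneg w x) hx hp0.le
  · refine closure_minimal (fun x hx => ?_) isClosed_closedBall
    have := hws (subset_tsupport w hx)
    rwa [mem_closedBall_zero_iff, hnorm, div_le_one hr] at this
  · intro x hx hxΩ
    have hx' : ‖r⁻¹ • (x - z)‖ ≤ 1 / 2 := by
      rw [hnorm, div_le_iff₀ hr]
      linarith [mem_closedBall.1 hx]
    have hut' := hut (r⁻¹ • (x - z)) ⟨mem_closedBall_zero_iff.2 hx', by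
      simpa [smul_inv_smul₀ hr.ne'] using hxΩ⟩
    have hmem : r⁻¹ • (x - z) ∈ ball (0 : En n) 1 := by
      rw [mem_ball_zero_iff]; linarith
    simp only [Function.comp_apply, w, indicator_of_mem hmem]
    exact le_max_of_le_left ((one_le_div ht).2 hut')

lemma Adm_nonempty (E : Set (En n)) (hE : E ⊆ closedBall 0 (1 / 2)) {t : ℝ} (ht : 0 ≤ t) :
    (Adm E (ball 0 1) t).Nonempty := by
  refine ⟨fun x => 2 * t * (1 - ‖x‖), ⟨Real.toNNReal (2 * t),
    (LipschitzWith.of_dist_le_mul fun x y => ?_).lipschitzOnWith⟩, fun x hx => ?_, fun x hx => ?_⟩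
  · rw [Real.dist_eq, ← mul_sub, sub_sub_sub_cancel_left, abs_mul, abs_of_nonneg (by positivity),
      Real.coe_toNNReal _ (by positivity), abs_sub_comm, dist_eq_norm]
    gcongr
    exact abs_norm_sub_norm_le x y
  · have := mem_closedBall_zero_iff.1 (hE hx)
    nlinarith
  · rw [frontier_ball _ one_ne_zero, mem_sphere_zero_iff_norm] at hx
    simp [hx]

/-- The constant in the lower bound for the double-phase energy. -/
def fatConst (n : ℕ) (p q κ : ℝ) : ℝ :=
  min κ (κ / 2 * ((κ / (2 * volume.real (ball (0 : En n) 1))) ^ (1 / p)) ^ (q - p))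

lemma fatConst_pos {p q κ : ℝ} (hκ : 0 < κ) : 0 < fatConst n p q κ := by
  have := volume_real_unitBall_pos (n := n)
  unfold fatConst
  positivity

lemma fatConst_le_integral {p q κ t B : ℝ} (hp : 0 < p) (hpq : p < q) (hκ : 0 < κ) (ht : 0 < t)
    {b : En n → ℝ} (hb : ∀ x, 0 ≤ b x) (hbm : Measurable b) (hbB : ∀ x ∈ ball 0 1, b x ≤ B)
    {u : En n → ℝ} {K : NNReal} (hu : LipschitzOnWith K u (ball 0 1))
    (h : κ ≤ ∫ x in ball (0 : En n) 1, (gnorm u x / t) ^ p) :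
    fatConst n p q κ ≤ ∫ x in ball (0 : En n) 1,
      phi b p q x (gnorm u x) / phiMinus b p q (ball 0 1) t := by
  have hq : 0 < q := hp.trans hpq
  set ω := volume.real (ball (0 : En n) 1) with hω
  have hω0 : 0 < ω := volume_real_unitBall_pos
  set d := (κ / (2 * ω)) ^ (1 / p) with hd
  have hd0 : 0 < d := by positivity
  set m := aInfOn b (ball 0 1)
  have hm : 0 ≤ m := aInfOn_nonneg hb _
  have hgm := measurable_gnorm u
  have hgK : ∀ x ∈ ball (0 : En n) 1, gnorm u x ≤ K := fun x hx =>
    norm_fderiv_le_of_lipschitzOn ℝ (isOpen_ball.mem_nhds hx) hu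
  have hg0 : ∀ x, 0 ≤ gnorm u x := gnorm_nonneg u
  have hint : ∀ {e : ℝ}, 0 < e → IntegrableOn (fun x => (gnorm u x / t) ^ e) (ball 0 1) :=
    fun {e} he => by
      refine Measure.integrableOn_of_bounded (M := (K / t : ℝ) ^ e) measure_ball_lt_top.ne
        ((hgm.div_const t).pow_const e).aestronglyMeasurable ?_
      filter_upwards [ae_restrict_mem measurableSet_ball] with x hx
      have := hg0 x
      rw [Real.norm_of_nonneg (by positivity)]
      gcongr
      exact hgK x hx
  have hphi : IntegrableOn (fun x => phi b p q x (gnorm u x)) (ball 0 1) := by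
    refine Measure.integrableOn_of_bounded (M := (K : ℝ) ^ p + B * (K : ℝ) ^ q)
      measure_ball_lt_top.ne
      ((hgm.pow_const p).add (hbm.mul (hgm.pow_const q))).aestronglyMeasurable ?_
    filter_upwards [ae_restrict_mem measurableSet_ball] with x hx
    have h1 := hg0 x
    have h2 := hb x
    have h3 := hgK x hx
    have h4 := hbB x hx
    have h5 : 0 ≤ B := h2.trans h4
    rw [phi, Real.norm_of_nonneg (by positivity)]
    gcongr
  have hqb : κ / 2 * d ^ (q - p) ≤ ∫ x in ball (0 : En n) 1, (gnorm u x / t) ^ q := by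
    have hcst : IntegrableOn (fun _ : En n => d ^ p) (ball 0 1) volume :=
      integrableOn_const measure_ball_lt_top.ne
    have h1 : ∫ x in ball (0 : En n) 1, (gnorm u x / t) ^ p ≤
        ∫ x in ball (0 : En n) 1, (d ^ p + d ^ (p - q) * (gnorm u x / t) ^ q) :=
      integral_mono (hint hp) (hcst.add ((hint hq).const_mul _)) fun x =>
        rpow_le_rpow_add_mul_rpow (div_nonneg (hg0 x) ht.le) hd0 hp hpq.le
    rw [integral_add hcst ((hint hq).const_mul _), setIntegral_const, integral_const_mul,
      smul_eq_mul, ← hω] at h1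
    have h2 : ω * d ^ p = κ / 2 := by
      rw [hd, ← Real.rpow_mul (by positivity), one_div_mul_cancel hp.ne', Real.rpow_one]
      field_simp
    have h3 : d ^ (p - q) * d ^ (q - p) = 1 := by
      rw [← Real.rpow_add hd0]; simp
    have h4 : κ / 2 ≤ d ^ (p - q) * ∫ x in ball (0 : En n) 1, (gnorm u x / t) ^ q := by linarith
    have h5 : 0 < d ^ (q - p) := by positivity
    calc κ / 2 * d ^ (q - p)
        ≤ (d ^ (p - q) * ∫ x in ball (0 : En n) 1, (gnorm u x / t) ^ q) * d ^ (q - p) := by gcongr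
      _ = (d ^ (p - q) * d ^ (q - p)) * ∫ x in ball (0 : En n) 1, (gnorm u x / t) ^ q := by ring
      _ = _ := by rw [h3, one_mul]
  have htp : 0 < t ^ p := Real.rpow_pos_of_pos ht p
  have htq : 0 < t ^ q := Real.rpow_pos_of_pos ht q
  have hden : 0 < phiMinus b p q (ball 0 1) t := by
    change 0 < t ^ p + m * t ^ q
    positivity
  rw [integral_div, le_div_iff₀ hden]
  have hlow : t ^ p * (∫ x in ball (0 : En n) 1, (gnorm u x / t) ^ p) +
      m * t ^ q * (∫ x in ball (0 : En n) 1, (gnorm u x / t) ^ q) ≤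
      ∫ x in ball (0 : En n) 1, phi b p q x (gnorm u x) := by
    rw [← integral_const_mul, ← integral_const_mul,
      ← integral_add ((hint hp).const_mul _) ((hint hq).const_mul _)]
    refine setIntegral_mono_on (((hint hp).const_mul _).add ((hint hq).const_mul _)) hphi
      measurableSet_ball fun x hx => ?_
    have hx0 := hg0 x
    have hmx : m ≤ b x := aInfOn_le hb hx
    rw [phi, Real.div_rpow hx0 ht.le, Real.div_rpow hx0 ht.le, mul_div_cancel₀ _ htp.ne',
      mul_assoc, mul_div_cancel₀ _ htq.ne']
    gcongr
  have h1 : fatConst n p q κ ≤ ∫ x in ball (0 : En n) 1, (gnorm u x / t) ^ p :=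
    (min_le_left _ _).trans h
  have h2 : fatConst n p q κ ≤ ∫ x in ball (0 : En n) 1, (gnorm u x / t) ^ q :=
    (min_le_right _ _).trans hqb
  calc fatConst n p q κ * phiMinus b p q (ball 0 1) t
      = t ^ p * fatConst n p q κ + m * t ^ q * fatConst n p q κ := by
        change _ * (t ^ p + m * t ^ q) = _
        ring
    _ ≤ _ := le_trans (by gcongr) hlow

lemma continuous_of_holder {a : En n → ℝ} {A α : ℝ} (hα : 0 < α)
    (h : ∀ x y, |a x - a y| ≤ A * dist x y ^ α) : Continuous a := by
  refine continuous_iff_continuousAt.2 fun y => ?_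
  rw [ContinuousAt, tendsto_iff_dist_tendsto_zero]
  refine squeeze_zero (fun x => dist_nonneg) (fun x => h x y) ?_
  have hc : Continuous fun x => A * dist x y ^ α :=
    continuous_const.mul ((continuous_id.dist continuous_const).rpow_const fun _ => Or.inr hα.le)
  simpa [Real.zero_rpow hα.ne'] using hc.tendsto y

end DoublePhase

/-- **From the pointwise Hardy inequality back to the capacity density condition**
(Theorem 1.9, (4) ⇒ (1), with the infimum coefficient `a^-_{y,R}`). -/
theorem fatness_of_pointwise_hardy
    (n : ℕ) (hn : 0 < n) (p q c0 : ℝ)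
    (hp : 1 < p) (hpq : p < q) (hc0 : 0 < c0) :
    ∃ cfat : ℝ, 0 < cfat ∧
      ∀ (α A ro : ℝ) (a : En n → ℝ) (Ω : Set (En n)),
        0 < α → α ≤ 1 → (∀ x, 0 ≤ a x) → 0 ≤ A →
        (∀ x y, |a x - a y| ≤ A * dist x y ^ α) →
        q / p ≤ 1 + α / n →
        IsOpen Ω → 0 < ro → ro ≤ 1 →
        (∀ z ∈ Ω, ∀ rz : ℝ, rz = infDist z (frontier Ω) → rz < ro →
          ∀ (y : En n) (R : ℝ), 0 < R → ∀ u ∈ Lip0 Ω,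
            |u z| ^ p + aInfOn a (ball y R) * |u z| ^ q ≤
              c0 * (1 + aInfOn a (ball y R) *
                    (maxOp (2 * rz) (fun x => (rz * gnorm u x) ^ p) z) ^ ((q - p) / p)) *
                maxOp (2 * rz) (fun x => (rz * gnorm u x) ^ p) z) →
        LocUnifPhiFat a p q Ωᶜ cfat ro := by
  have hC : 0 < 2 * max c0 1 := by positivity
  have hp0 : 0 < p := one_pos.trans hp
  have hκ := energyConst_pos (n := n) (p := p) hC
  refine ⟨fatConst n p q (energyConst n p (2 * max c0 1)), fatConst_pos hκ, ?_⟩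
  intro α A ro a Ω hα _ ha _ hH _ _ _ _ H z hz r hr hrro
  have hBH := ballHardy_of_doublePhase hp0 hpq ha H
  have hb : Continuous fun x => a (z + r • x) := (continuous_of_holder hα hH).comp (by fun_prop)
  obtain ⟨B, hB⟩ := (isCompact_closedBall (0 : En n) 1).bddAbove_image hb.continuousOn
  have : Nonempty (Ioi (0 : ℝ)) := ⟨⟨1, mem_Ioi.2 one_pos⟩⟩
  refine le_ciInf fun ⟨t, ht⟩ => le_csInf ((Adm_nonempty _ (fun x hx => hx.1) (mem_Ioi.1 ht).le).image _) ?_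
  rintro _ ⟨u, hu, rfl⟩
  obtain ⟨K, hK⟩ := hu.1
  exact fatConst_le_integral hp0 hpq hκ ht (fun x => ha _) hb.measurable
    (fun x hx => hB (mem_image_of_mem _ (ball_subset_closedBall hx))) (hK.mono subset_closure)
    (hBH.energyConst_le hn hp hC hz hr hrro ht hu)
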